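/- Every idempotent magma M satisfying the generalized entropic property satisfies the identities (x*y)*(u*v) = ((x*y)*(u*y)) * ((x*v)*(u*v)) and (x*y)*(u*v) = ((x*y)*(x*v)) * ((u*y)*(u*v)) for all x,y,u,v in M. -/

import Mathlib

/-- Evaluation of a binary term (an element of the free magma on two
generators) in a magma `M` under the assignment `0 ↦ a`, `1 ↦ b`. -/
def evalBin {M : Type*} [Mul M] (t : FreeMagma (Fin 2)) (a b : M) : M :=
  FreeMagma.lift ![a, b] t

/-- A magma satisfies the generalized entropic property if there are binary
terms `t`, `s` with `(x*y)*(u*v) = t(x,u)*s(y,v)`. -/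
def GEP (M : Type*) [Mul M] : Prop :=
  ∃ t s : FreeMagma (Fin 2),
    ∀ x y u v : M, (x * y) * (u * v) = evalBin t x u * evalBin s y v

theorem evalBin_self {M : Type*} [Mul M] (hidem : ∀ x : M, x * x = x)
    (t : FreeMagma (Fin 2)) (a : M) : evalBin t a a = a := by
  unfold evalBin
  induction t using FreeMagma.recOnMul with
  | ih1 i => fin_cases i <;> simp
  | ih2 p q hp hq => rw [map_mul, hp, hq, hidem]

/-- Every idempotent magma with the generalized entropic property satisfies
the two pseudo-distributivity identities. -/
theorem stmt_11 {M : Type*} [Mul M]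
    (hidem : ∀ x : M, x * x = x)
    (hGEP : GEP M) :
    ∀ x y u v : M,
      (x * y) * (u * v) = ((x * y) * (u * y)) * ((x * v) * (u * v)) ∧
      (x * y) * (u * v) = ((x * y) * (x * v)) * ((u * y) * (u * v)) := by
  obtain ⟨t, s, h⟩ := hGEP
  have h1 : ∀ x y v : M, (x * y) * (x * v) = x * evalBin s y v := fun x y v => by
    rw [h, evalBin_self hidem]
  have h2 : ∀ x u y : M, (x * y) * (u * y) = evalBin t x u * y := fun x u y => by
    rw [h, evalBin_self hidem]
  intro x y u v
  constructor
  · rw [h2 x u y, h2 x u v, h1, h]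
  · rw [h1 x y v, h1 u y v, h2, h]
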